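/- (Lemma on stability, case (ii)) Let a < 0, b > 0, r > 1, σ = −a·r, ξ = (σ·b/(2·a²))·(a·(r − 2) − σ + √((σ − a·r)² + 4·a·σ)), x₁ = σ·b·√ξ/(σ·b + a·ξ), y₁ = √ξ, z₁ = σ·ξ/(σ·b + a·ξ). If a·r + 1 < 0 and b > b_cr, where b_cr = (4·a·(r − 1)·(a·r + 1)·√(r·(r − 1)) + (a·r − 1)³)/((a·r + 1)² − 4·a·r²), then every complex root λ of the cubic polynomial λ³ + p₁·λ² + p₂(x₁, y₁, z₁)·λ + p₃(x₁, y₁, z₁) has negative real part, where p₁ = b − a·r + 1, p₂(x, y, z) = x² + a·y² − a·z² − a·r·(b − r + 1) + b, p₃(x, y, z) = −a·(2·x·y·z + r·x² − y² + b·z² − b·r·(r − 1)). -/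

import Mathlib

/-- Routh–Hurwitz criterion (sufficiency) for a real cubic. -/
theorem routh_hurwitz_cubic (p q t : ℝ) (hp : 0 < p) (hq : 0 < q) (ht : 0 < t) (h : t < p * q)
    (lam : ℂ) (hl : lam ^ 3 + (p : ℂ) * lam ^ 2 + (q : ℂ) * lam + (t : ℂ) = 0) : lam.re < 0 := by
  obtain ⟨u, v⟩ := lam
  have h1 := congrArg Complex.re hl
  have h2 := congrArg Complex.im hl
  simp [pow_succ] at h1 h2
  show u < 0
  by_contra hu
  have hu : 0 ≤ u := not_lt.mp hu
  have hv : v * (3 * u ^ 2 - v ^ 2 + 2 * p * u + q) = 0 := by linear_combination h2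
  rcases mul_eq_zero.mp hv with hv | hv
  · subst hv
    have : 0 < u ^ 3 + p * u ^ 2 + q * u + t := by positivity
    linarith
  · have e : 8 * u ^ 3 + 8 * p * u ^ 2 + (2 * q + 2 * p ^ 2) * u + (p * q - t) = 0 := by
      linear_combination -h1 + (3 * u + p) * hv
    have : 0 ≤ 8 * u ^ 3 + 8 * p * u ^ 2 + (2 * q + 2 * p ^ 2) * u := by positivity
    linarith

/-- Lemma on stability, case (ii): under condition (ii), every complex root
of the characteristic polynomial at S₊ has negative real part. -/
theorem stability_case_ii
    (a b r σ ξ x₁ y₁ z₁ : ℝ) (ha : a < 0) (hb : 0 < b) (hr : 1 < r) (hσ : σ = -a * r)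
    (hξ : ξ = (σ * b / (2 * a ^ 2)) *
      (a * (r - 2) - σ + Real.sqrt ((σ - a * r) ^ 2 + 4 * a * σ)))
    (hx₁ : x₁ = σ * b * Real.sqrt ξ / (σ * b + a * ξ))
    (hy₁ : y₁ = Real.sqrt ξ)
    (hz₁ : z₁ = σ * ξ / (σ * b + a * ξ))
    (har : a * r + 1 < 0)
    (hbcr : b > (4 * a * (r - 1) * (a * r + 1) * Real.sqrt (r * (r - 1)) + (a * r - 1) ^ 3) /
        ((a * r + 1) ^ 2 - 4 * a * r ^ 2)) :
    ∀ lam : ℂ,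
      lam ^ 3 + ((b - a * r + 1 : ℝ) : ℂ) * lam ^ 2 +
        ((x₁ ^ 2 + a * y₁ ^ 2 - a * z₁ ^ 2 - a * r * (b - r + 1) + b : ℝ) : ℂ) * lam +
        ((-a * (2 * x₁ * y₁ * z₁ + r * x₁ ^ 2 - y₁ ^ 2 + b * z₁ ^ 2 - b * r * (r - 1)) : ℝ) : ℂ)
        = 0 → lam.re < 0 := by
  obtain ⟨s, hs⟩ : ∃ s, s = Real.sqrt (r * (r - 1)) := ⟨_, rfl⟩
  have hrr : 0 < r * (r - 1) := mul_pos (by linarith) (by linarith)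
  have hs0 : 0 < s := by rw [hs]; exact Real.sqrt_pos.mpr hrr
  have hs2 : s ^ 2 = r * (r - 1) := by rw [hs]; exact Real.sq_sqrt hrr.le
  have hsr : s < r := by nlinarith
  have hd : 0 < r - s := by linarith
  have ha0 : a ≠ 0 := ha.ne
  have hr0 : 0 < r := by linarith
  have hsq : Real.sqrt ((σ - a * r) ^ 2 + 4 * a * σ) = -2 * a * s := by
    rw [show (σ - a * r) ^ 2 + 4 * a * σ = (-2 * a * s) ^ 2 by
      rw [hσ]; linear_combination (-4 * a ^ 2) * hs2]
    exact Real.sqrt_sq (by nlinarith)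
  have hξ2 : ξ = b * s * (r - s) := by
    rw [hξ, hsq, hσ]
    field_simp
    linear_combination 2 * hs2
  have hξ0 : 0 < ξ := by rw [hξ2]; positivity
  have hden : σ * b + a * ξ = -a * r * b * (r - s) := by
    rw [hξ2, hσ]; linear_combination (-a * b * r + a * b * r) * hs2 + (-a * b) * hs2
  have hy2 : y₁ ^ 2 = ξ := by rw [hy₁]; exact Real.sq_sqrt hξ0.le
  have hx : x₁ * (r - s) = y₁ := by
    rw [hx₁, hden, hσ, ← hy₁]; field_simp
  have hz : z₁ = s := by
    rw [hz₁, hden, hσ, hξ2]; field_simp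
  have hxy : x₁ * y₁ = b * s := by
    have : (x₁ * y₁ - b * s) * (r - s) = 0 := by
      linear_combination y₁ * hx + hy2 + hξ2
    rcases mul_eq_zero.mp this with h | h <;> linarith
  have hx2 : x₁ ^ 2 = b * (s + r - 1) := by
    have : (x₁ ^ 2 - b * (s + r - 1)) * (r - s) = 0 := by
      linear_combination x₁ * hx + hxy + b * hs2
    rcases mul_eq_zero.mp this with h | h <;> linarith
  have hp2 : x₁ ^ 2 + a * y₁ ^ 2 - a * z₁ ^ 2 - a * r * (b - r + 1) + b
      = b * (s + r - a * r * (r - s)) := by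
    rw [hx2, hy2, hξ2, hz]; linear_combination (-a * b - a) * hs2
  have hp3 : -a * (2 * x₁ * y₁ * z₁ + r * x₁ ^ 2 - y₁ ^ 2 + b * z₁ ^ 2 - b * r * (r - 1))
      = -4 * a * b * (r * (r - 1)) := by
    rw [hx2, hy2, hξ2, hz]; linear_combination (-2 * a * s) * hxy - 4 * a * b * hs2
  have hc : 0 < -a := by linarith
  have hA : 0 < s + r - a * r * (r - s) := by
    have : 0 < -a * r * (r - s) := by positivity
    linarith
  have hD : 0 < (a * r + 1) ^ 2 - 4 * a * r ^ 2 := by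
    have : 0 < -a * r ^ 2 := by positivity
    nlinarith [sq_nonneg (a * r + 1)]
  rw [← hs, gt_iff_lt, div_lt_iff₀ hD] at hbcr
  have key : -4 * a * (r * (r - 1)) < (b - a * r + 1) * (s + r - a * r * (r - s)) := by
    have h1 := mul_lt_mul_of_pos_right hbcr hA
    have h2 : (4 * a * (r - 1) * (a * r + 1) * s + (a * r - 1) ^ 3) * (s + r - a * r * (r - s))
        = ((a * r + 1) ^ 2 - 4 * a * r ^ 2) *
          (-4 * a * (r * (r - 1)) - (1 - a * r) * (s + r - a * r * (r - s))) := by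
      linear_combination (4 * a * (r - 1) * (a * r + 1) ^ 2) * hs2
    rw [h2] at h1
    have h3 : -4 * a * (r * (r - 1)) - (1 - a * r) * (s + r - a * r * (r - s))
        < b * (s + r - a * r * (r - s)) := by
      refine lt_of_mul_lt_mul_left (a := (a * r + 1) ^ 2 - 4 * a * r ^ 2) ?_ hD.le
      linarith
    linarith
  intro lam hl
  rw [hp2, hp3] at hl
  refine routh_hurwitz_cubic _ _ _ (by linarith) (mul_pos hb hA) ?_ ?_ lam hl
  · have : 0 < -a * b * (r * (r - 1)) := by positivity
    linarith
  · have := mul_lt_mul_of_pos_left key hb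
    linarith
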